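/- Let (X,d) be a compact metric space, κ ≥ 1, and let f₁,…,f_κ : X → X be bijections such that every f_i and every f_i⁻¹ is Lipschitz continuous. Let ψ : X → ℝ be continuous. Assume: (a) the semigroup action generated by f₁,…,f_κ has frequent hitting times; (b) there exists 1 ≤ i ≤ κ such that ψ is not a coboundary with respect to f_i. Then there exist a point x ∈ X and a sequence ω ∈ Σ_κ := {1,…,κ}^ℕ such that liminf_{n→∞} (1/n) ∑_{j=0}^{n−1} ψ(f_ω^j(x)) < limsup_{n→∞} (1/n) ∑_{j=0}^{n−1} ψ(f_ω^j(x)); in particular the set of Birkhoff non-typical points of the semigroup action is non-empty. -/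

import Mathlib

open Filter Topology Metric MeasureTheory

noncomputable section

/-- Composition `f_{ω_{p-1}} ∘ ⋯ ∘ f_{ω₀}` along a finite word `w = (ω₀, …, ω_{p-1})`. -/
def wordComp {X : Type*} {κ : ℕ} (f : Fin κ → X → X) (w : List (Fin κ)) (x : X) : X :=
  w.foldl (fun y i => f i y) x

/-- Composition `f_ω^n = f_{ω_{n-1}} ∘ ⋯ ∘ f_{ω₀}` along an infinite word `ω ∈ {1,…,κ}^ℕ`. -/
def seqComp {X : Type*} {κ : ℕ} (f : Fin κ → X → X) (ω : ℕ → Fin κ) : ℕ → X → X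
  | 0 => id
  | n + 1 => f (ω n) ∘ seqComp f ω n

/-- The semigroup action generated by `f₁, …, f_κ` has *frequent hitting times*:
for every `ε > 0` there is `K(ε)` such that for all `x₁, x₂ ∈ X` and every radius
`0 < r ≤ ε/2` there are `p ≤ K(ε)`, a word `w` of length `p` and a point `z` with
`B(z, r/2) ⊆ f_w^p(B(x₁,ε)) ∩ B(x₂,r)`. -/
def FrequentHittingTimes {X : Type*} [MetricSpace X] {κ : ℕ} (f : Fin κ → X → X) : Prop :=
  ∀ ε : ℝ, 0 < ε → ∃ K : ℕ, ∀ x₁ x₂ : X, ∀ r : ℝ, 0 < r → r ≤ ε / 2 →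
    ∃ p ≤ K, ∃ w : List (Fin κ), w.length = p ∧ ∃ z : X,
      Metric.ball z (r / 2) ⊆ wordComp f w '' Metric.ball x₁ ε ∩ Metric.ball x₂ r

/-- `ψ` is not a coboundary with respect to `f`: there are two `f`-invariant Borel
probability measures giving `ψ` different space averages. -/
def NotCoboundary {X : Type*} [MeasurableSpace X] (f : X → X) (ψ : X → ℝ) : Prop :=
  ∃ μ₁ μ₂ : Measure X, IsProbabilityMeasure μ₁ ∧ IsProbabilityMeasure μ₂ ∧
    μ₁.map f = μ₁ ∧ μ₂.map f = μ₂ ∧ ∫ x, ψ x ∂μ₁ < ∫ x, ψ x ∂μ₂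


/-! Birkhoff sums along `ω` are the Birkhoff sums of `(x, ω) ↦ ψ x` under the skew product
`(x, ω) ↦ (f_{ω₀} x, σ ω)`, where `σ` is the shift. For an open set `U` of points and a finite word
`u`, the image `f_u(U)` is open, so the hitting property gives a bound `K`, depending on `u` and `U`
only, on the time needed to steer it into any open set. Choose `n` much larger than `|u| + K`, steer
into the open set where the `n`-th Birkhoff average of `f_i` is below a value slightly above
`∫ ψ dμ`, and apply `f_i` from then on: the initial stretch of length at most `|u| + K` does not
spoil the average. Using this for `ψ` and one invariant measure, and for `-ψ` and the other, there
are `a < b` such that averages below `a`, and averages above `b`, occur at arbitrarily late times on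
dense open sets of pairs `(x, ω)`. By Baire's theorem some pair has infinitely many of both. -/

section BirkhoffAverage

lemma continuous_birkhoffAverage {α : Type*} [TopologicalSpace α] {T : α → α} {φ : α → ℝ}
    (hT : Continuous T) (hφ : Continuous φ) (n : ℕ) : Continuous (birkhoffAverage ℝ T φ n) :=
  (continuous_const_smul (n : ℝ)⁻¹).comp
    (continuous_finsetSum (Finset.range n) fun j _ => hφ.comp (hT.iterate j))

variable {α E : Type*} [NormedAddCommGroup E] [NormedSpace ℝ E]

lemma norm_birkhoffAverage_le {T : α → α} {φ : α → E} {C : ℝ} (hC : ∀ x, ‖φ x‖ ≤ C) (n : ℕ)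
    (x : α) : ‖birkhoffAverage ℝ T φ n x‖ ≤ C := by
  rcases n.eq_zero_or_pos with rfl | hn
  · simpa using (norm_nonneg _).trans (hC x)
  · have hsum : ‖birkhoffSum T φ n x‖ ≤ n * C := by
      simpa [birkhoffSum] using norm_sum_le_of_le (Finset.range n) fun j _ => hC (T^[j] x)
    rw [birkhoffAverage, norm_smul, norm_inv, Real.norm_natCast]
    exact (inv_mul_le_iff₀ (Nat.cast_pos.2 hn)).2 hsum

variable [MeasurableSpace α] {μ : Measure α} {T : α → α}

lemma integrable_birkhoffAverage (hT : MeasurePreserving T μ μ) {φ : α → E} (hφ : Integrable φ μ)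
    (n : ℕ) : Integrable (birkhoffAverage ℝ T φ n) μ :=
  (integrable_finsetSum _ fun j _ => (hT.iterate j).integrable_comp_of_integrable hφ).smul _

lemma integral_birkhoffAverage (hT : MeasurePreserving T μ μ) {φ : α → E} (hφ : Integrable φ μ)
    {n : ℕ} (hn : n ≠ 0) : ∫ x, birkhoffAverage ℝ T φ n x ∂μ = ∫ x, φ x ∂μ := by
  have hiter (j : ℕ) : ∫ x, φ (T^[j] x) ∂μ = ∫ x, φ x ∂μ := by
    have hmap := (hT.iterate j).map_eq
    rw [← integral_map (hT.iterate j).aemeasurable (hmap.symm ▸ hφ.aestronglyMeasurable), hmap]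
  have hsum : ∫ x, birkhoffSum T φ n x ∂μ = (n : ℝ) • ∫ x, φ x ∂μ :=
    (integral_finsetSum _ fun j _ => (hT.iterate j).integrable_comp_of_integrable hφ).trans
      (by simp [hiter, Nat.cast_smul_eq_nsmul])
  simp only [birkhoffAverage]
  rw [integral_smul, hsum, inv_smul_smul₀ (Nat.cast_ne_zero.2 hn)]

lemma exists_birkhoffAverage_le_integral [IsProbabilityMeasure μ] (hT : MeasurePreserving T μ μ)
    {φ : α → ℝ} (hφ : Integrable φ μ) {n : ℕ} (hn : n ≠ 0) :
    ∃ x, birkhoffAverage ℝ T φ n x ≤ ∫ x, φ x ∂μ :=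
  integral_birkhoffAverage hT hφ hn ▸ exists_le_integral (integrable_birkhoffAverage hT hφ n)

end BirkhoffAverage

lemma eventually_forall_birkhoffAverage_add_lt {α : Type*} {T : α → α} {φ : α → ℝ} {B a b : ℝ}
    (hB : ∀ x, φ x ≤ B) (hab : a < b) (P : ℕ) :
    ∀ᶠ n : ℕ in atTop, ∀ p ≤ P, ∀ x,
      birkhoffAverage ℝ T φ n (T^[p] x) < a → birkhoffAverage ℝ T φ (p + n) x < b := by
  have hlarge : ∀ᶠ n : ℕ in atTop, P * |B - b| < n * (b - a) :=
    (tendsto_natCast_atTop_atTop.atTop_mul_const (sub_pos.2 hab)).eventually_gt_atTop _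
  filter_upwards [hlarge, eventually_gt_atTop 0] with n hn hn0 p hp x hx
  have hn0' : (0 : ℝ) < n := Nat.cast_pos.2 hn0
  have hpn : (0 : ℝ) < (p + n : ℕ) := Nat.cast_pos.2 (by omega)
  rw [birkhoffAverage, smul_eq_mul, inv_mul_lt_iff₀ hn0'] at hx
  rw [birkhoffAverage, smul_eq_mul, inv_mul_lt_iff₀ hpn, birkhoffSum_add, Nat.cast_add]
  have hhead : birkhoffSum T φ p x ≤ p * B := by
    simpa [birkhoffSum] using Finset.sum_le_sum fun j (_ : j ∈ Finset.range p) => hB (T^[j] x)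
  have hdefect : p * (B - b) ≤ P * |B - b| :=
    (mul_le_mul_of_nonneg_left (le_abs_self _) p.cast_nonneg).trans (by gcongr)
  linarith

lemma eventually_residual_frequently_mem {Y : Type*} [TopologicalSpace Y] {U : ℕ → Set Y}
    (hU : ∀ n, IsOpen (U n)) (hdense : ∀ m, Dense (⋃ n ≥ m, U n)) :
    ∀ᶠ y in residual Y, ∃ᶠ n in atTop, y ∈ U n := by
  have hlate (m : ℕ) : ∀ᶠ y in residual Y, y ∈ ⋃ n ≥ m, U n :=
    residual_of_dense_open (isOpen_biUnion fun n _ => hU n) (hdense m)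
  filter_upwards [eventually_countable_forall.2 hlate] with y hy
  simpa [frequently_atTop] using hy

lemma liminf_lt_limsup_of_frequently {ι R : Type*} [ConditionallyCompleteLinearOrder R]
    {l : Filter ι} {u : ι → R} {a b : R} (hab : a < b) (ha : ∃ᶠ i in l, u i < a)
    (hb : ∃ᶠ i in l, b < u i) (hbelow : l.IsBoundedUnder (· ≥ ·) u)
    (habove : l.IsBoundedUnder (· ≤ ·) u) : liminf u l < limsup u l :=
  calc
    liminf u l ≤ a := liminf_le_of_frequently_le (ha.mono fun _ => le_of_lt) hbelow
    _ < b := hab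
    _ ≤ limsup u l := le_limsup_of_frequently_le (hb.mono fun _ => le_of_lt) habove

section SkewProduct

variable {X : Type*} {κ : ℕ} {f : Fin κ → X → X}

/-- The skew product `(x, ω) ↦ (f_{ω₀} x, σ ω)` of the generators over the shift `σ`, whose
iterates encode the compositions `f_ω^n`. -/
def skewProduct (f : Fin κ → X → X) (q : X × (ℕ → Fin κ)) : X × (ℕ → Fin κ) :=
  (f (q.2 0) q.1, fun n => q.2 (n + 1))

lemma iterate_skewProduct (f : Fin κ → X → X) (n : ℕ) (x : X) (ω : ℕ → Fin κ) :
    (skewProduct f)^[n] (x, ω) = (seqComp f ω n x, fun j => ω (n + j)) := by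
  induction n with
  | zero => simp [seqComp]
  | succ n ih =>
    rw [Function.iterate_succ_apply', ih]
    simp [skewProduct, seqComp, add_assoc, add_comm 1]

lemma iterate_skewProduct_append (f : Fin κ → X → X) (w : List (Fin κ)) (x : X)
    (ω : ℕ → Fin κ) :
    (skewProduct f)^[w.length] (x, Stream'.appendStream' w ω) = (wordComp f w x, ω) := by
  induction w generalizing x with
  | nil => rfl
  | cons i _ ih => exact ih (f i x)

lemma birkhoffAverage_skewProduct (f : Fin κ → X → X) (ψ : X → ℝ) (n : ℕ)
    (q : X × (ℕ → Fin κ)) :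
    birkhoffAverage ℝ (skewProduct f) (ψ ∘ Prod.fst) n q =
      (n : ℝ)⁻¹ * ∑ j ∈ Finset.range n, ψ (seqComp f q.2 j q.1) := by
  obtain ⟨x, ω⟩ := q
  simp [birkhoffAverage, birkhoffSum, iterate_skewProduct]

lemma birkhoffAverage_skewProduct_const (f : Fin κ → X → X) (ψ : X → ℝ) (n : ℕ) (x : X)
    (i : Fin κ) :
    birkhoffAverage ℝ (skewProduct f) (ψ ∘ Prod.fst) n (x, fun _ => i) =
      birkhoffAverage ℝ (f i) ψ n x := by
  have hsemiconj : Function.Semiconj (fun y => (y, fun _ => i)) (f i) (skewProduct f) :=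
    fun _ => rfl
  have hiter (j : ℕ) : (skewProduct f)^[j] (x, fun _ => i) = ((f i)^[j] x, fun _ => i) :=
    ((hsemiconj.iterate_right j).eq x).symm
  simp [birkhoffAverage, birkhoffSum, hiter]

variable [TopologicalSpace X]

lemma continuous_skewProduct (hf : ∀ i, Continuous (f i)) : Continuous (skewProduct f) := by
  have heval : Continuous fun p : Fin κ × X => f p.1 p.2 := continuous_prod_of_discrete_left.2 hf
  have hstep : Continuous fun q : X × (ℕ → Fin κ) => f (q.2 0) q.1 :=
    heval.comp (f := fun q : X × (ℕ → Fin κ) => (q.2 0, q.1)) (by fun_prop)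
  exact hstep.prodMk (by fun_prop)

lemma isOpenMap_wordComp (hf : ∀ i, IsOpenMap (f i)) (w : List (Fin κ)) :
    IsOpenMap (wordComp f w) := by
  induction w with
  | nil => exact IsOpenMap.id
  | cons i w ih => exact ih.comp (hf i)

end SkewProduct

lemma exists_forall_append_mem {α : Type*} [TopologicalSpace α] [DiscreteTopology α]
    {V : Set (ℕ → α)} (hV : IsOpen V) {ω : ℕ → α} (hω : ω ∈ V) :
    ∃ u : List α, ∀ ω' : ℕ → α, Stream'.appendStream' u ω' ∈ V := by
  obtain ⟨_, ⟨ξ, N, rfl⟩, hξ, hNV⟩ :=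
    (PiNat.isTopologicalBasis_cylinders fun _ : ℕ => α).exists_subset_of_mem_open hω hV
  rw [PiNat.mem_cylinder_iff_eq] at hξ
  refine ⟨List.ofFn fun j : Fin N => ω j, fun ω' => hNV (hξ ▸ fun j hj => ?_)⟩
  exact (Stream'.get_append_left j _ ω' (by simpa using hj)).trans (by simp)

/-- A purely topological consequence of `FrequentHittingTimes`: the orbit of a nonempty open set
`U` meets every nonempty open set within a time that depends only on `U`. -/
def UniformHittingTimes {X : Type*} [TopologicalSpace X] {κ : ℕ} (f : Fin κ → X → X) : Prop :=
  ∀ U : Set X, IsOpen U → U.Nonempty → ∃ K : ℕ, ∀ V : Set X, IsOpen V → V.Nonempty →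
    ∃ w : List (Fin κ), w.length ≤ K ∧ (wordComp f w '' U ∩ V).Nonempty

lemma FrequentHittingTimes.uniformHittingTimes {X : Type*} [MetricSpace X] {κ : ℕ}
    {f : Fin κ → X → X} (hf : FrequentHittingTimes f) : UniformHittingTimes f := by
  rintro U hU ⟨x₁, hx₁⟩
  obtain ⟨ε, hε, hεU⟩ := Metric.isOpen_iff.1 hU x₁ hx₁
  obtain ⟨K, hK⟩ := hf ε hε
  refine ⟨K, ?_⟩
  rintro V hV ⟨x₂, hx₂⟩
  obtain ⟨δ, hδ, hδV⟩ := Metric.isOpen_iff.1 hV x₂ hx₂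
  have hr : 0 < min δ (ε / 2) := by positivity
  obtain ⟨_, hp, w, rfl, z, hz⟩ := hK x₁ x₂ (min δ (ε / 2)) hr (min_le_right _ _)
  obtain ⟨hzU, hzV⟩ := hz (mem_ball_self (half_pos hr))
  exact ⟨w, hp, z, Set.image_mono hεU hzU, hδV (ball_subset_ball (min_le_left _ _) hzV)⟩

lemma NotCoboundary.nonempty {X : Type*} [MeasurableSpace X] {g : X → X} {ψ : X → ℝ}
    (h : NotCoboundary g ψ) : Nonempty X := by
  obtain ⟨μ, _, _, _⟩ := h
  exact nonempty_of_isProbabilityMeasure μ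

section Hitting

variable {X : Type*} [TopologicalSpace X] {κ : ℕ} {f : Fin κ → X → X}

lemma UniformHittingTimes.dense_iUnion_birkhoffAverage_lt (hf : UniformHittingTimes f)
    (hfc : ∀ i, Continuous (f i)) (hfo : ∀ i, IsOpenMap (f i)) {ψ : X → ℝ} (hψ : Continuous ψ)
    {B : ℝ} (hB : ∀ x, ψ x ≤ B) {i : Fin κ} {a b : ℝ} (hab : a < b)
    (ha : ∃ᶠ n in atTop, ∃ x, birkhoffAverage ℝ (f i) ψ n x < a) (m : ℕ) :
    Dense (⋃ n ≥ m, {q | birkhoffAverage ℝ (skewProduct f) (ψ ∘ Prod.fst) n q < b}) := by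
  rw [dense_iff_inter_open]
  rintro W hW ⟨⟨x, ω⟩, hxω⟩
  obtain ⟨U, V, hU, hV, hxU, hωV, hUV⟩ := isOpen_prod_iff.1 hW x ω hxω
  obtain ⟨u, huV⟩ := exists_forall_append_mem hV hωV
  obtain ⟨K, hK⟩ := hf _ (isOpenMap_wordComp hfo u U hU) (Set.Nonempty.image _ ⟨x, hxU⟩)
  obtain ⟨n, ⟨x₀, hx₀⟩, hnm, hn⟩ := (ha.and_eventually ((eventually_ge_atTop m).and
    (eventually_forall_birkhoffAverage_add_lt (T := skewProduct f) (φ := ψ ∘ Prod.fst)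
      (fun q => hB q.1) hab (u.length + K)))).exists
  obtain ⟨w, hw, _, ⟨_, ⟨y, hyU, rfl⟩, rfl⟩, hy⟩ := hK {z | birkhoffAverage ℝ (f i) ψ n z < a}
    (isOpen_lt (continuous_birkhoffAverage (hfc i) hψ n) continuous_const) ⟨x₀, hx₀⟩
  let q : X × (ℕ → Fin κ) :=
    (y, Stream'.appendStream' u (Stream'.appendStream' w fun _ => i))
  have hq : (skewProduct f)^[u.length + w.length] q =
      (wordComp f w (wordComp f u y), fun _ => i) := by
    rw [add_comm, Function.iterate_add_apply]
    exact (congrArg _ (iterate_skewProduct_append f u y _)).trans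
      (iterate_skewProduct_append f w _ _)
  have hlate : u.length + w.length + n ≥ m := by omega
  refine ⟨q, hUV ⟨hyU, huV _⟩, Set.mem_biUnion hlate ?_⟩
  refine hn (u.length + w.length) (by gcongr) q ?_
  rw [hq, birkhoffAverage_skewProduct_const]
  exact hy

variable [MeasurableSpace X] [BorelSpace X]

lemma UniformHittingTimes.eventually_residual_frequently_birkhoffAverage_lt
    (hf : UniformHittingTimes f) (hfc : ∀ i, Continuous (f i)) (hfo : ∀ i, IsOpenMap (f i))
    (ψ : BoundedContinuousFunction X ℝ) {i : Fin κ} {μ : Measure X} [IsProbabilityMeasure μ]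
    (hμ : μ.map (f i) = μ) {c : ℝ} (hc : ∫ x, ψ x ∂μ < c) :
    ∀ᶠ q in residual (X × (ℕ → Fin κ)), ∃ᶠ n in atTop,
      birkhoffAverage ℝ (skewProduct f) (ψ ∘ Prod.fst) n q < c := by
  obtain ⟨a, ha, hac⟩ := exists_between hc
  have hlow : ∀ᶠ n in atTop, ∃ x, birkhoffAverage ℝ (f i) ψ n x < a := by
    filter_upwards [eventually_ne_atTop 0] with n hn
    obtain ⟨x, hx⟩ := exists_birkhoffAverage_le_integral ⟨(hfc i).measurable, hμ⟩
      (ψ.integrable μ) hn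
    exact ⟨x, hx.trans_lt ha⟩
  have hcont (n : ℕ) : Continuous (birkhoffAverage ℝ (skewProduct f) (ψ ∘ Prod.fst) n) :=
    continuous_birkhoffAverage (continuous_skewProduct hfc) (ψ.continuous.comp continuous_fst) n
  have hle (x : X) : ψ x ≤ ‖ψ‖ := (le_abs_self _).trans (ψ.norm_coe_le_norm x)
  exact eventually_residual_frequently_mem
    (U := fun n => {q | birkhoffAverage ℝ (skewProduct f) (ψ ∘ Prod.fst) n q < c})
    (fun n => isOpen_lt (hcont n) continuous_const)
    (hf.dense_iUnion_birkhoffAverage_lt hfc hfo ψ.continuous hle hac hlow.frequently)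

theorem UniformHittingTimes.eventually_residual_liminf_lt_limsup_birkhoffAverage
    (hf : UniformHittingTimes f) (hfc : ∀ i, Continuous (f i)) (hfo : ∀ i, IsOpenMap (f i))
    (ψ : BoundedContinuousFunction X ℝ) (hcob : ∃ i, NotCoboundary (f i) ψ) :
    ∀ᶠ q in residual (X × (ℕ → Fin κ)),
      liminf (fun n => birkhoffAverage ℝ (skewProduct f) (ψ ∘ Prod.fst) n q) atTop <
        limsup (fun n => birkhoffAverage ℝ (skewProduct f) (ψ ∘ Prod.fst) n q) atTop := by
  obtain ⟨i, μ₁, μ₂, _, _, hμ₁, hμ₂, hlt⟩ := hcob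
  obtain ⟨a, ha, ha'⟩ := exists_between hlt
  obtain ⟨b, hab, hb⟩ := exists_between ha'
  have hb_neg : ∫ x, (-ψ) x ∂μ₂ < -b := by simpa [integral_neg] using hb
  filter_upwards [hf.eventually_residual_frequently_birkhoffAverage_lt hfc hfo ψ hμ₁ ha,
    hf.eventually_residual_frequently_birkhoffAverage_lt hfc hfo (-ψ) hμ₂ hb_neg] with q hlow hneg
  have hhigh : ∃ᶠ n in atTop, b < birkhoffAverage ℝ (skewProduct f) (ψ ∘ Prod.fst) n q := by
    have hneg_comp : ⇑(-ψ) ∘ Prod.fst = -(ψ ∘ Prod.fst : X × (ℕ → Fin κ) → ℝ) := rfl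
    rw [hneg_comp, birkhoffAverage_neg] at hneg
    exact hneg.mono fun _ => neg_lt_neg_iff.1
  have hbound (n : ℕ) := abs_le.1 (norm_birkhoffAverage_le (T := skewProduct f)
    (fun p : X × (ℕ → Fin κ) => ψ.norm_coe_le_norm p.1) n q)
  exact liminf_lt_limsup_of_frequently hab hlow hhigh
    (isBoundedUnder_of ⟨-‖ψ‖, fun n => (hbound n).1⟩)
    (isBoundedUnder_of ⟨‖ψ‖, fun n => (hbound n).2⟩)

theorem exists_irregular_point_semigroup_general [BaireSpace (X × (ℕ → Fin κ))]
    (hf : UniformHittingTimes f) (hfc : ∀ i, Continuous (f i)) (hfo : ∀ i, IsOpenMap (f i))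
    (ψ : BoundedContinuousFunction X ℝ) (hcob : ∃ i, NotCoboundary (f i) ψ) :
    ∃ x : X, ∃ ω : ℕ → Fin κ,
      liminf (fun n : ℕ => (n : ℝ)⁻¹ * ∑ j ∈ Finset.range n, ψ (seqComp f ω j x)) atTop <
        limsup (fun n : ℕ => (n : ℝ)⁻¹ * ∑ j ∈ Finset.range n, ψ (seqComp f ω j x)) atTop := by
  have : Nonempty (Fin κ) := ⟨hcob.choose⟩
  have : Nonempty X := hcob.choose_spec.nonempty
  obtain ⟨⟨x, ω⟩, hq⟩ := (dense_of_mem_residual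
    (hf.eventually_residual_liminf_lt_limsup_birkhoffAverage hfc hfo ψ hcob)).nonempty
  exact ⟨x, ω, by simpa only [Set.mem_ofPred_eq, birkhoffAverage_skewProduct] using hq⟩

end Hitting

/-- **Existence of Birkhoff non-typical points for semigroup actions.**
Let `f₁, …, f_κ` be bi-Lipschitz homeomorphisms of a compact metric space `X` generating a
semigroup action with frequent hitting times, and let `ψ` be continuous and not a coboundary
with respect to some generator. Then there exist a point `x ∈ X` and an infinite word
`ω ∈ Σ_κ = {1,…,κ}^ℕ` along which the Birkhoff averages of `ψ` oscillate:
their liminf is strictly smaller than their limsup. In particular the set of Birkhoff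
non-typical points of the semigroup action is non-empty. -/
theorem exists_irregular_point_semigroup {X : Type*} [MetricSpace X] [CompactSpace X]
    [MeasurableSpace X] [BorelSpace X] (κ : ℕ) (hκ : 1 ≤ κ)
    (f : Fin κ → X ≃ X)
    (hLip : ∀ i, ∃ L : NNReal, LipschitzWith L (f i))
    (hLipInv : ∀ i, ∃ L : NNReal, LipschitzWith L (f i).symm)
    (ψ : X → ℝ) (hψ : Continuous ψ)
    (hfht : FrequentHittingTimes (fun i => (f i : X → X)))
    (hcob : ∃ i, NotCoboundary (f i : X → X) ψ) :
    ∃ x : X, ∃ ω : ℕ → Fin κ,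
      liminf (fun n : ℕ => (n : ℝ)⁻¹ *
          ∑ j ∈ Finset.range n, ψ (seqComp (fun i => (f i : X → X)) ω j x)) atTop <
      limsup (fun n : ℕ => (n : ℝ)⁻¹ *
          ∑ j ∈ Finset.range n, ψ (seqComp (fun i => (f i : X → X)) ω j x)) atTop := by
  exact exists_irregular_point_semigroup_general hfht.uniformHittingTimes
    (fun i => (hLip i).choose_spec.continuous)
    (fun i => (f i).continuous_symm_iff.1 (hLipInv i).choose_spec.continuous)
    (BoundedContinuousFunction.mkOfCompact ⟨ψ, hψ⟩) hcob

end
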